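/- Let E, F, G be Hilbert spaces over ℂ and let f : E → G and g : F → G be bounded linear operators. Then the range of f is contained in the range of g if and only if there exists a constant k > 0 such that ‖f* y‖_E ≤ k ‖g* y‖_F for every y ∈ G, where f* and g* denote the Hilbert-space adjoints of f and g. -/

import Mathlib

open ContinuousLinearMap

/-- Range inclusion for bounded operators between Hilbert spaces is equivalent to a
norm majorization between the adjoints (Douglas-type lemma), the key lemma used in
the proof of Proposition 2.5. -/
theorem range_subset_iff_adjoint_norm_le
    {E F G : Type*}
    [NormedAddCommGroup E] [InnerProductSpace ℂ E] [CompleteSpace E]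
    [NormedAddCommGroup F] [InnerProductSpace ℂ F] [CompleteSpace F]
    [NormedAddCommGroup G] [InnerProductSpace ℂ G] [CompleteSpace G]
    (f : E →L[ℂ] G) (g : F →L[ℂ] G) :
    Set.range f ⊆ Set.range g ↔
      ∃ k : ℝ, 0 < k ∧ ∀ y : G,
        ‖ContinuousLinearMap.adjoint f y‖ ≤ k * ‖ContinuousLinearMap.adjoint g y‖ := by
  constructor
  · intro h
    have key : ∀ x : E, ∃ z : F, ∀ y : G, inner ℂ (adjoint f y) x = inner ℂ (adjoint g y) z := by
      intro x
      obtain ⟨z, hz⟩ := h ⟨x, rfl⟩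
      refine ⟨z, fun y => ?_⟩
      rw [adjoint_inner_left, adjoint_inner_left, hz]
    obtain ⟨C, hC⟩ := banach_steinhaus
      (g := fun y : G => innerSL ℂ (((‖adjoint g y‖⁻¹ : ℝ) : ℂ) • adjoint f y)) (by
        intro x
        obtain ⟨z, hz⟩ := key x
        refine ⟨‖z‖, fun y => ?_⟩
        rw [innerSL_apply_apply, inner_smul_left, hz y, norm_mul, RCLike.norm_conj,
          Complex.norm_real, norm_inv, norm_norm]
        calc _ ≤ ‖adjoint g y‖⁻¹ * (‖adjoint g y‖ * ‖z‖) := by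
              gcongr
              exact norm_inner_le_norm _ _
          _ = (‖adjoint g y‖⁻¹ * ‖adjoint g y‖) * ‖z‖ := by ring
          _ ≤ 1 * ‖z‖ := by
              gcongr
              exact inv_mul_le_one
          _ = ‖z‖ := one_mul _)
    refine ⟨max C 1, by positivity, fun y => ?_⟩
    by_cases h0 : adjoint g y = 0
    · obtain ⟨z, hz⟩ := key (adjoint f y)
      have h1 := hz y
      rw [h0, inner_zero_left, inner_self_eq_zero] at h1
      simp [h1, h0]
    · have hpos : 0 < ‖adjoint g y‖ := norm_pos_iff.mpr h0
      have h1 := hC y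
      rw [innerSL_apply_norm, norm_smul, Complex.norm_real, norm_inv, norm_norm,
        inv_mul_le_iff₀ hpos] at h1
      calc _ ≤ ‖adjoint g y‖ * C := h1
        _ = C * ‖adjoint g y‖ := mul_comm _ _
        _ ≤ _ := by
          gcongr
          exact le_max_left _ _
  · rintro ⟨k, hk, h⟩ _ ⟨x, rfl⟩
    let a : G →ₗ[ℂ] ℂ := ((innerSL ℂ x).comp (adjoint f)).toLinearMap
    let b : G →ₗ[ℂ] F := (adjoint g).toLinearMap
    have hb : ∃ C : ℝ, ∀ y, ‖a y‖ ≤ C * ‖b y‖ := by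
      refine ⟨‖x‖ * k, fun y => ?_⟩
      calc ‖a y‖ ≤ ‖x‖ * ‖adjoint f y‖ := norm_inner_le_norm _ _
        _ ≤ ‖x‖ * (k * ‖adjoint g y‖) := by
          gcongr
          exact h y
        _ = _ := (mul_assoc _ _ _).symm
    obtain ⟨φ, hφ, -⟩ := exists_extension_norm_eq _ (a.compLeftInverse b)
    refine ⟨(InnerProductSpace.toDual ℂ F).symm φ, ?_⟩
    refine ext_inner_right ℂ fun y => ?_
    rw [← adjoint_inner_right, ← adjoint_inner_right, InnerProductSpace.toDual_symm_apply]
    exact (hφ ⟨b y, ⟨y, rfl⟩⟩).trans (LinearMap.compLeftInverse_apply_of_bdd a b hb y (b y) rfl)
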